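/- If R is a right semidistributive semilocal ring, then every cyclic right R-module is quotient finite-dimensional. -/

import Mathlib

/-- A module is *distributive* if its lattice of submodules is distributive, i.e.
`X ⊓ (Y ⊔ Z) = (X ⊓ Y) ⊔ (X ⊓ Z)` for all submodules `X, Y, Z`. -/
def IsDistribModule (R M : Type*) [Ring R] [AddCommGroup M] [Module R M] : Prop :=
  ∀ X Y Z : Submodule R M, X ⊓ (Y ⊔ Z) = X ⊓ Y ⊔ X ⊓ Z

/-- A module is *finite-dimensional* (in the sense of Goldie/uniform dimension) if it
does not contain an infinite direct sum of nonzero submodules, i.e. every independent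
family of nonzero submodules is finite. -/
def IsFinDimModule (R M : Type*) [Ring R] [AddCommGroup M] [Module R M] : Prop :=
  ∀ (ι : Type) (N : ι → Submodule R M), iSupIndep N → (∀ i, N i ≠ ⊥) → Finite ι

/-- A module is *quotient finite-dimensional* if every quotient module of it is
finite-dimensional. -/
def IsQFDModule (R M : Type*) [Ring R] [AddCommGroup M] [Module R M] : Prop :=
  ∀ N : Submodule R M, IsFinDimModule R (M ⧸ N)

/-- A ring `A` is *right semidistributive* if, as a right module over itself
(i.e. as an `Aᵐᵒᵖ`-module), it is a direct sum of distributive submodules. -/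
def IsRightSemidistributiveRing (A : Type*) [Ring A] : Prop :=
  ∃ (ι : Type) (N : ι → Submodule Aᵐᵒᵖ A),
    iSupIndep N ∧ iSup N = ⊤ ∧ ∀ i, IsDistribModule Aᵐᵒᵖ (N i)

/-- A ring `R` is *semilocal* if `R` modulo its Jacobson radical is a semisimple ring. -/
def IsSemilocalRing (R : Type*) [Ring R] : Prop :=
  IsSemisimpleModule R (R ⧸ Ideal.jacobson (⊥ : Ideal R))

/-! Disjoint submodules of a distributive module admit only the zero map between them, so the simple
summands of a semisimple distributive module are pairwise non-isomorphic. If the ring has finitely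
many simple modules, such a module is therefore Noetherian. Distributivity passes to subquotients,
so every semisimple subquotient of a distributive module is Noetherian. The latter condition is
inherited by quotients and extensions, hence by finite sums of submodules, and it forces finite
uniform dimension: each member of an independent family of nonzero submodules has a simple
subquotient, and the direct sum of these simple modules is a semisimple subquotient of the whole.

A semilocal ring has finitely many simple right modules because `R → R ⧸ J` is a surjective
local homomorphism onto a semisimple ring. This condition is left-right symmetric, and it puts the
kernel inside every maximal one-sided ideal. -/

section Distributive

variable {A M N : Type*} [Ring A] [AddCommGroup M] [Module A M] [AddCommGroup N] [Module A N]

theorem IsDistribModule.submodule (h : IsDistribModule A M) (K : Submodule A M) :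
    IsDistribModule A K := by
  intro X Y Z
  apply Submodule.map_injective_of_injective K.injective_subtype
  simp only [Submodule.map_inf _ K.injective_subtype, Submodule.map_sup]
  exact h _ _ _

theorem IsDistribModule.of_surjective (h : IsDistribModule A M) (f : M →ₗ[A] N)
    (hf : Function.Surjective f) : IsDistribModule A N := by
  intro X Y Z
  have comap_sup : (Y ⊔ Z).comap f = Y.comap f ⊔ Z.comap f := by
    rw [← Submodule.comap_map_eq_self (f := f) (p := Y.comap f ⊔ Z.comap f)
        ((LinearMap.ker_le_comap f).trans le_sup_left),
      Submodule.map_sup, Submodule.map_comap_eq_of_surjective hf,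
      Submodule.map_comap_eq_of_surjective hf]
  rw [← Submodule.map_comap_eq_of_surjective hf (X ⊓ (Y ⊔ Z)), Submodule.comap_inf, comap_sup, h,
    Submodule.map_sup, ← Submodule.comap_inf, ← Submodule.comap_inf,
    Submodule.map_comap_eq_of_surjective hf, Submodule.map_comap_eq_of_surjective hf]

theorem IsDistribModule.linearMap_eq_zero_of_disjoint (h : IsDistribModule A M)
    {P Q : Submodule A M} (hPQ : Disjoint P Q) (f : P →ₗ[A] Q) : f = 0 := by
  let graph : Submodule A M := LinearMap.range (P.subtype + Q.subtype ∘ₗ f)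
  have le_sup : P ≤ graph ⊔ Q := fun p hp ↦ by
    rw [← add_sub_cancel_right p (f ⟨p, hp⟩ : M)]
    exact Submodule.sub_mem_sup ⟨⟨p, hp⟩, rfl⟩ (f _).2
  have le_graph : P ≤ graph := by
    have : P = P ⊓ graph := by simpa [inf_eq_left.2 le_sup, hPQ.eq_bot] using h P graph Q
    exact inf_eq_left.1 this.symm
  ext p
  obtain ⟨p', hp'⟩ : ∃ p' : P, (p' : M) + f p' = p := le_graph p.2
  have f_eq : (f p' : M) = (p - p' : P) := eq_sub_of_add_eq' hp'
  have f_eq_zero : (f p' : M) = 0 :=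
    Submodule.disjoint_def.1 hPQ _ (f_eq ▸ (p - p').2) (f p').2
  have : p' = p := Subtype.ext (by simpa [f_eq_zero] using hp')
  simpa [this] using f_eq_zero

theorem IsDistribModule.isEmpty_linearEquiv_of_disjoint (h : IsDistribModule A M)
    {P Q : Submodule A M} [Nontrivial P] (hPQ : Disjoint P Q) : IsEmpty (P ≃ₗ[A] Q) := by
  refine ⟨fun e ↦ ?_⟩
  obtain ⟨x, hx⟩ := exists_ne (0 : P)
  have e_eq_zero := h.linearMap_eq_zero_of_disjoint hPQ e.toLinearMap
  exact hx (e.map_eq_zero_iff.1 (LinearMap.congr_fun e_eq_zero x))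

end Distributive

section FinitelyManySimples

/-- Isomorphism of the simple modules `A ⧸ I`, with `I` a maximal left ideal. Every simple
`A`-module has this form, so the quotient by this relation is the set of isomorphism classes of
simple modules, without a choice of universe for the modules. -/
def simpleQuotientSetoid (A : Type*) [Ring A] : Setoid {I : Ideal A // I.IsMaximal} where
  r I J := Nonempty ((A ⧸ I.1) ≃ₗ[A] (A ⧸ J.1))
  iseqv := ⟨fun _ ↦ ⟨.refl _ _⟩, fun ⟨e⟩ ↦ ⟨e.symm⟩, fun ⟨e⟩ ⟨e'⟩ ↦ ⟨e.trans e'⟩⟩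

/-- The ring `A` has only finitely many simple left modules up to isomorphism. -/
def HasFinitelyManySimples (A : Type*) [Ring A] : Prop :=
  Finite (Quotient (simpleQuotientSetoid A))

variable {A : Type*} [Ring A]

theorem HasFinitelyManySimples.finite_of_pairwise_isEmpty_linearEquiv
    (hA : HasFinitelyManySimples A) {ι : Type*} (S : ι → Type*) [∀ i, AddCommGroup (S i)]
    [∀ i, Module A (S i)] [∀ i, IsSimpleModule A (S i)]
    (hS : Pairwise fun i j ↦ IsEmpty (S i ≃ₗ[A] S j)) : Finite ι := by
  have : Finite (Quotient (simpleQuotientSetoid A)) := hA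
  have exists_equiv (i : ι) : ∃ I : Ideal A, I.IsMaximal ∧ Nonempty (S i ≃ₗ[A] A ⧸ I) :=
    isSimpleModule_iff_quot_maximal.1 inferInstance
  choose I maximal equiv using exists_equiv
  refine Finite.of_injective (fun i ↦ Quotient.mk (simpleQuotientSetoid A) ⟨I i, maximal i⟩) ?_
  intro i j hij
  by_contra hne
  obtain ⟨e⟩ : Nonempty ((A ⧸ I i) ≃ₗ[A] (A ⧸ I j)) := Quotient.exact hij
  exact (hS hne).false ((equiv i).some.trans (e.trans (equiv j).some.symm))

theorem hasFinitelyManySimples_of_forall_exists_linearEquiv (P : Type*) [AddCommGroup P]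
    [Module A P] [IsNoetherian A P]
    (hP : ∀ I : Ideal A, I.IsMaximal → ∃ T : Submodule A P, Nonempty ((A ⧸ I) ≃ₗ[A] T)) :
    HasFinitelyManySimples A := by
  choose T equiv using hP
  let T' (q : Quotient (simpleQuotientSetoid A)) : Submodule A P := T q.out.1 q.out.2
  have simple (q) : IsSimpleModule A (T' q) :=
    have : IsSimpleModule A (A ⧸ q.out.1) := isSimpleModule_iff_isCoatom.2 q.out.2.out
    .congr (equiv _ _).some.symm
  let component (q) : isotypicComponents A P :=
    ⟨isotypicComponent A P (T' q), T' q, simple q, rfl⟩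
  refine Finite.of_injective component fun q q' hq ↦ Quotient.out_equiv_out.1 ?_
  have le_component : T' q ≤ isotypicComponent A P (T' q') :=
    (T' q).le_isotypicComponent.trans_eq (congrArg Subtype.val hq)
  obtain ⟨e⟩ := isIsotypicOfType_submodule_iff.1 (.isotypicComponent A P (T' q')) _ le_component
  exact ⟨(equiv _ _).some.trans (e.trans (equiv _ _).some.symm)⟩

theorem ker_le_of_isMaximal_of_isLocalHom {B : Type*} [Ring B] (f : A →+* B) [IsLocalHom f]
    {I : Ideal A} (hI : I.IsMaximal) : RingHom.ker f ≤ I := by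
  intro k hk
  by_contra hkI
  obtain ⟨y, a, ha, hya⟩ := hI.exists_inv hkI
  have map_a : f a = 1 := by simpa [RingHom.mem_ker.1 hk] using congrArg f hya
  have : IsUnit a := isUnit_of_map_unit f a (map_a ▸ isUnit_one)
  exact hI.ne_top (I.eq_top_of_isUnit_mem ha this)

theorem hasFinitelyManySimples_of_isLocalHom {B : Type*} [Ring B] [IsSemisimpleRing B]
    (f : A →+* B) [IsLocalHom f] (hf : Function.Surjective f) : HasFinitelyManySimples A := by
  have : RingHomSurjective f := ⟨hf⟩
  let l : (A ⧸ RingHom.ker f) →ₛₗ[f] B := (RingHom.ker f).liftQ f.toSemilinearMap le_rfl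
  have l_bijective : Function.Bijective l :=
    ⟨LinearMap.ker_eq_bot.1 (Submodule.ker_liftQ_eq_bot _ _ _ le_rfl), fun b ↦
      let ⟨a, ha⟩ := hf b; ⟨Submodule.Quotient.mk a, ha⟩⟩
  have : IsSemisimpleModule A (A ⧸ RingHom.ker f) :=
    (l.isSemisimpleModule_iff_of_bijective l_bijective).2 inferInstance
  refine hasFinitelyManySimples_of_forall_exists_linearEquiv (A ⧸ RingHom.ker f) fun I hI ↦ ?_
  have : IsSimpleModule A (A ⧸ I) := isSimpleModule_iff_isCoatom.2 hI.out
  have : Nontrivial (A ⧸ I) := IsSimpleModule.nontrivial A _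
  let π := Submodule.factor (ker_le_of_isMaximal_of_isLocalHom f hI)
  have : π ≠ 0 := LinearMap.ne_zero_of_surjective (Submodule.factor_surjective _)
  exact LinearMap.linearEquiv_of_ne_zero this

theorem isUnit_of_sub_one_mem_jacobson {a : A} (ha : a - 1 ∈ Ideal.jacobson (⊥ : Ideal A)) :
    IsUnit a := by
  obtain ⟨b, hb⟩ := Ideal.exists_mul_sub_mem_of_sub_one_mem_jacobson a ha
  have hba : b * a = 1 := sub_eq_zero.1 hb
  have hb1 : b - 1 ∈ Ideal.jacobson (⊥ : Ideal A) := by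
    have : b - 1 = -(b * (a - 1)) := by simp [mul_sub, hba]
    exact this ▸ neg_mem (Ideal.mul_mem_left _ b ha)
  obtain ⟨c, hc⟩ := Ideal.exists_mul_sub_mem_of_sub_one_mem_jacobson b hb1
  have hcb : c * b = 1 := sub_eq_zero.1 hc
  exact ⟨⟨a, b, left_inv_eq_right_inv hcb hba ▸ hcb, hba⟩, rfl⟩

theorem isLocalHom_quotient_mk_of_le_jacobson (I : Ideal A) [I.IsTwoSided]
    (hI : I ≤ Ideal.jacobson ⊥) : IsLocalHom (Ideal.Quotient.mk I) := by
  have isUnit_of_mk_eq_one {x : A} (hx : Ideal.Quotient.mk I x = 1) : IsUnit x :=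
    isUnit_of_sub_one_mem_jacobson (hI (Ideal.Quotient.eq.1 (by rw [hx, map_one])))
  refine ⟨fun a ha ↦ ?_⟩
  obtain ⟨b', hab', hba'⟩ := isUnit_iff_exists.1 ha
  obtain ⟨b, rfl⟩ := Ideal.Quotient.mk_surjective b'
  obtain ⟨c, hc⟩ := (isUnit_of_mk_eq_one ((map_mul _ a b).trans hab')).exists_right_inv
  obtain ⟨d, hd⟩ := (isUnit_of_mk_eq_one ((map_mul _ b a).trans hba')).exists_left_inv
  exact isUnit_iff_exists_and_exists.2 ⟨⟨b * c, by rwa [← mul_assoc]⟩, d * b, by rwa [mul_assoc]⟩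

theorem IsSemilocalRing.hasFinitelyManySimples_mulOpposite {R : Type*} [Ring R]
    (h : IsSemilocalRing R) : HasFinitelyManySimples Rᵐᵒᵖ := by
  let J := Ideal.jacobson (⊥ : Ideal R)
  let π := Ideal.Quotient.mk J
  have : IsSemisimpleRing (R ⧸ J) := by
    let id' : (R ⧸ J) →ₛₗ[π] (R ⧸ J) := ⟨AddHom.id _, fun _ _ ↦ rfl⟩
    exact (id'.isSemisimpleModule_iff_of_bijective Function.bijective_id).1 h
  have : IsLocalHom π := isLocalHom_quotient_mk_of_le_jacobson J le_rfl
  have : IsLocalHom π.op := ⟨fun a ha ↦ (isUnit_of_map_unit π a.unop ha.unop).op⟩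
  refine hasFinitelyManySimples_of_isLocalHom (RingHom.op π) ?_
  exact MulOpposite.op_surjective.comp
    (Ideal.Quotient.mk_surjective.comp MulOpposite.unop_surjective)

end FinitelyManySimples

/-- Every semisimple subquotient of the module is Noetherian, equivalently of finite length. Unlike
finite uniform dimension, this condition visibly passes to submodules, quotients and extensions. -/
def NoetherianSemisimpleSubquotients (A M : Type*) [Ring A] [AddCommGroup M] [Module A M] : Prop :=
  ∀ (K : Submodule A M) (L : Submodule A K), IsSemisimpleModule A (K ⧸ L) → IsNoetherian A (K ⧸ L)

namespace NoetherianSemisimpleSubquotients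

variable {A M N : Type*} [Ring A] [AddCommGroup M] [Module A M] [AddCommGroup N] [Module A N]

theorem of_injective (h : NoetherianSemisimpleSubquotients A M) (f : N →ₗ[A] M)
    (hf : Function.Injective f) : NoetherianSemisimpleSubquotients A N := by
  intro K L _
  let e := K.equivMapOfInjective f hf
  let e' := Submodule.Quotient.equiv L (L.map e.toLinearMap) e rfl
  have := h _ _ (.congr e'.symm)
  exact isNoetherian_of_linearEquiv e'.symm

theorem of_surjective (h : NoetherianSemisimpleSubquotients A M) (f : M →ₗ[A] N)
    (hf : Function.Surjective f) : NoetherianSemisimpleSubquotients A N := by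
  intro K L _
  let g : K.comap f →ₗ[A] K ⧸ L := L.mkQ ∘ₗ f.restrict fun _ hx ↦ hx
  have hg : Function.Surjective g :=
    L.mkQ_surjective.comp fun ⟨k, hk⟩ ↦ let ⟨m, hm⟩ := hf k; ⟨⟨m, by simpa [hm]⟩, Subtype.ext hm⟩
  let e := g.quotKerEquivOfSurjective hg
  have := h _ _ (.congr e)
  exact isNoetherian_of_linearEquiv e

theorem isNoetherian (h : NoetherianSemisimpleSubquotients A M) [IsSemisimpleModule A M] :
    IsNoetherian A M :=
  have := h ⊤ ⊥ inferInstance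
  isNoetherian_of_linearEquiv ((Submodule.quotEquivOfEqBot ⊥ rfl).trans Submodule.topEquiv)

theorem of_submodule_of_quotient (P : Submodule A M)
    (hP : NoetherianSemisimpleSubquotients A P) (hMP : NoetherianSemisimpleSubquotients A (M ⧸ P)) :
    NoetherianSemisimpleSubquotients A M := by
  intro K L _
  let P' : Submodule A K := P.comap K.subtype
  let S : Submodule A (K ⧸ L) := P'.map L.mkQ
  have noetherian_S : IsNoetherian A S := by
    have hP' : NoetherianSemisimpleSubquotients A P' :=
      hP.of_injective (K.subtype.restrict fun _ hx ↦ hx) fun _ _ hxy ↦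
        Subtype.ext (Subtype.ext (congrArg (fun y : P ↦ (y : M)) hxy))
    exact (hP'.of_surjective (L.mkQ.submoduleMap P')
      (LinearMap.submoduleMap_surjective _ _)).isNoetherian
  have noetherian_quot : IsNoetherian A ((K ⧸ L) ⧸ S) := by
    have hKP' : NoetherianSemisimpleSubquotients A (K ⧸ P') :=
      hMP.of_injective (P'.mapQ P K.subtype le_rfl) (LinearMap.ker_eq_bot.1 <|
        Submodule.ker_liftQ_eq_bot _ _ _ (by simp [P', LinearMap.ker_comp]))
    exact (hKP'.of_surjective (P'.mapQ S L.mkQ (Submodule.le_comap_map _ _)) (by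
      rw [← LinearMap.range_eq_top, Submodule.range_mapQ]; simp)).isNoetherian
  exact (isNoetherian_iff_submodule_quotient S).2 ⟨noetherian_S, noetherian_quot⟩

theorem sup {P Q : Submodule A M} (hP : NoetherianSemisimpleSubquotients A P)
    (hQ : NoetherianSemisimpleSubquotients A Q) :
    NoetherianSemisimpleSubquotients A (P ⊔ Q : Submodule A M) := by
  have hQ' : NoetherianSemisimpleSubquotients A (Q.comap (P ⊔ Q).subtype) :=
    hQ.of_surjective (Submodule.comapSubtypeEquivOfLe le_sup_right).symm.toLinearMap
      (LinearEquiv.surjective _)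
  have hPQ : NoetherianSemisimpleSubquotients A (_ ⧸ Q.comap (P ⊔ Q).subtype) :=
    (hP.of_surjective _ (Submodule.mkQ_surjective _)).of_surjective
      (LinearMap.quotientInfEquivSupQuotient P Q).toLinearMap (LinearEquiv.surjective _)
  exact of_submodule_of_quotient _ hQ' hPQ

theorem finsetSup (s : Finset (Submodule A M))
    (hs : ∀ N ∈ s, NoetherianSemisimpleSubquotients A N) :
    NoetherianSemisimpleSubquotients A (s.sup id : Submodule A M) :=
  Finset.sup_induction (p := fun N : Submodule A M ↦ NoetherianSemisimpleSubquotients A N)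
    (fun _ _ _ ↦ inferInstance) (fun _ h _ ↦ h.sup) hs

end NoetherianSemisimpleSubquotients

section FiniteDimensional

variable {A M : Type*} [Ring A] [AddCommGroup M] [Module A M]

theorem exists_isSimpleModule_subquotient [Nontrivial M] :
    ∃ (K : Submodule A M) (L : Submodule A K), IsSimpleModule A (K ⧸ L) := by
  obtain ⟨x, hx⟩ := exists_ne (0 : M)
  have : Nontrivial (A ∙ x) := Submodule.nontrivial_span_singleton hx
  obtain ⟨L, hL, -⟩ :=
    (eq_top_or_exists_le_coatom (⊥ : Submodule A (A ∙ x))).resolve_left bot_ne_top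
  exact ⟨A ∙ x, L, isSimpleModule_iff_isCoatom.2 hL⟩

theorem iSupIndep_range_dfinsupp_lsingle {ι : Type*} [DecidableEq ι] (S : ι → Type*)
    [∀ i, AddCommGroup (S i)] [∀ i, Module A (S i)] :
    iSupIndep fun i ↦ LinearMap.range (DFinsupp.lsingle (R := A) (M := S) i) := by
  intro i
  have iSup_le_ker : ⨆ j ≠ i, LinearMap.range (DFinsupp.lsingle (R := A) (M := S) j) ≤
      LinearMap.ker (DFinsupp.lapply i) := by
    refine iSup₂_le fun j hj ↦ ?_
    rintro _ ⟨b, rfl⟩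
    exact DFinsupp.single_eq_of_ne hj.symm
  refine Submodule.disjoint_def.2 ?_
  rintro _ ⟨a, rfl⟩ ha
  have : a = 0 := by simpa using iSup_le_ker ha
  rw [this, map_zero]

theorem finite_of_isNoetherian_dfinsupp {ι : Type*} (S : ι → Type*) [∀ i, AddCommGroup (S i)]
    [∀ i, Module A (S i)] [∀ i, Nontrivial (S i)] [IsNoetherian A (Π₀ i, S i)] : Finite ι := by
  classical
  refine WellFoundedGT.finite_of_iSupIndep (iSupIndep_range_dfinsupp_lsingle (A := A) S)
    fun i hi ↦ ?_
  obtain ⟨y, hy⟩ := exists_ne (0 : S i)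
  have lsingle_eq_zero : DFinsupp.lsingle (R := A) i = (0 : S i →ₗ[A] Π₀ i, S i) :=
    LinearMap.range_eq_bot.1 hi
  exact hy (DFinsupp.single_eq_zero.1 (LinearMap.congr_fun lsingle_eq_zero y))

theorem NoetherianSemisimpleSubquotients.isFinDimModule
    (h : NoetherianSemisimpleSubquotients A M) : IsFinDimModule A M := by
  classical
  intro ι F hF hne
  have (i : ι) : Nontrivial (F i) := Submodule.nontrivial_iff_ne_bot.2 (hne i)
  choose K L simple using fun i ↦ exists_isSimpleModule_subquotient (A := A) (M := F i)
  have (i : ι) : Nontrivial (K i ⧸ L i) := IsSimpleModule.nontrivial A _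
  have h_sum : NoetherianSemisimpleSubquotients A (Π₀ i, K i) :=
    (h.of_injective _ hF.dfinsupp_lsum_injective).of_injective
      (DFinsupp.mapRange.linearMap fun i ↦ (K i).subtype)
      ((DFinsupp.mapRange_injective _ fun _ ↦ map_zero _).2 fun i ↦ (K i).injective_subtype)
  have h_simples : NoetherianSemisimpleSubquotients A (Π₀ i, K i ⧸ L i) :=
    h_sum.of_surjective (DFinsupp.mapRange.linearMap fun i ↦ (L i).mkQ)
      ((DFinsupp.mapRange_surjective _ fun _ ↦ map_zero _).2 fun i ↦ (L i).mkQ_surjective)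
  have := h_simples.isNoetherian
  exact finite_of_isNoetherian_dfinsupp (A := A) fun i ↦ K i ⧸ L i

theorem IsDistribModule.isNoetherian [IsSemisimpleModule A M] (hM : IsDistribModule A M)
    (hA : HasFinitelyManySimples A) : IsNoetherian A M := by
  obtain ⟨s, independent, sSup_eq_top, simple⟩ :=
    IsSemisimpleModule.exists_sSupIndep_sSup_simples_eq_top A M
  have (S : s) : IsSimpleModule A S := simple S S.2
  have pairwise_not_equiv : Pairwise fun S S' : s ↦ IsEmpty (S.1 ≃ₗ[A] S'.1) := fun S S' hne ↦
    have := IsSimpleModule.nontrivial A S.1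
    hM.isEmpty_linearEquiv_of_disjoint
      (independent.pairwiseDisjoint S.2 S'.2 (Subtype.coe_ne_coe.2 hne))
  have : Finite s := hA.finite_of_pairwise_isEmpty_linearEquiv (fun S : s ↦ S.1) pairwise_not_equiv
  have : IsNoetherian A (⨆ S : s, (S : Submodule A M) : Submodule A M) := inferInstance
  rw [← sSup_eq_iSup', sSup_eq_top] at this
  exact isNoetherian_of_linearEquiv Submodule.topEquiv

theorem IsDistribModule.noetherianSemisimpleSubquotients (hM : IsDistribModule A M)
    (hA : HasFinitelyManySimples A) : NoetherianSemisimpleSubquotients A M :=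
  fun K L _ ↦ ((hM.submodule K).of_surjective L.mkQ L.mkQ_surjective).isNoetherian hA

end FiniteDimensional

theorem IsRightSemidistributiveRing.exists_finset_sup_eq_top {R : Type*} [Ring R]
    (hR : IsRightSemidistributiveRing R) (M : Type*) [AddCommGroup M] [Module Rᵐᵒᵖ M]
    [Module.Finite Rᵐᵒᵖ M] :
    ∃ s : Finset (Submodule Rᵐᵒᵖ M), (∀ N ∈ s, IsDistribModule Rᵐᵒᵖ N) ∧ s.sup id = ⊤ := by
  obtain ⟨ι, N, -, iSup_eq_top, distrib⟩ := hR
  have sSup_eq_top : ⊤ ≤ sSup {N : Submodule Rᵐᵒᵖ M | IsDistribModule Rᵐᵒᵖ N} := by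
    intro m _
    let f : R →ₗ[Rᵐᵒᵖ] M :=
      { toFun r := MulOpposite.op r • m
        map_add' := by simp [add_smul]
        map_smul' := by simp [mul_smul] }
    have map_le (i) : (N i).map f ≤ sSup {N : Submodule Rᵐᵒᵖ M | IsDistribModule Rᵐᵒᵖ N} :=
      le_sSup ((distrib i).of_surjective (f.submoduleMap (N i)) (f.submoduleMap_surjective _))
    have map_top_le :
        (⊤ : Submodule Rᵐᵒᵖ R).map f ≤ sSup {N : Submodule Rᵐᵒᵖ M | IsDistribModule Rᵐᵒᵖ N} := by
      rw [← iSup_eq_top, Submodule.map_iSup]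
      exact iSup_le map_le
    exact map_top_le ⟨1, trivial, one_smul _ m⟩
  have compact : IsCompactElement (⊤ : Submodule Rᵐᵒᵖ M) :=
    (Submodule.fg_iff_compact _).1 Module.Finite.fg_top
  obtain ⟨s, hs, le_sup⟩ :=
    (CompleteLattice.isCompactElement_iff_exists_le_sSup_of_le_sSup _ _).1 compact _ sSup_eq_top
  exact ⟨s, fun N hN ↦ hs hN, top_le_iff.1 le_sup⟩

theorem stmt6_general {A : Type*} [Ring A] (hA : HasFinitelyManySimples A)
    {M : Type*} [AddCommGroup M] [Module A M] (s : Finset (Submodule A M))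
    (hs : ∀ N ∈ s, IsDistribModule A N) (hM : s.sup id = ⊤) : IsQFDModule A M := by
  intro X
  have h_sup : NoetherianSemisimpleSubquotients A (s.sup id : Submodule A M) :=
    .finsetSup s fun N hN ↦ (hs N hN).noetherianSemisimpleSubquotients hA
  have h : NoetherianSemisimpleSubquotients A M :=
    h_sup.of_surjective (s.sup id).subtype fun m ↦ ⟨⟨m, hM ▸ trivial⟩, rfl⟩
  exact (h.of_surjective X.mkQ X.mkQ_surjective).isFinDimModule

/-- If `R` is a right semidistributive semilocal ring, then every cyclic right
`R`-module is quotient finite-dimensional. -/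
theorem stmt6 (R : Type*) [Ring R] (hsd : IsRightSemidistributiveRing R)
    (hsl : IsSemilocalRing R)
    (M : Type*) [AddCommGroup M] [Module Rᵐᵒᵖ M]
    (hcyc : ∃ m : M, Submodule.span Rᵐᵒᵖ {m} = ⊤) :
    IsQFDModule Rᵐᵒᵖ M := by
  have : Module.Finite Rᵐᵒᵖ M := ⟨hcyc.choose_spec ▸ Submodule.fg_span_singleton _⟩
  obtain ⟨s, hs, hM⟩ := hsd.exists_finset_sup_eq_top M
  exact stmt6_general hsl.hasFinitelyManySimples_mulOpposite s hs hM
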